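/- arXiv:2404.09413 — 2 statements merged into one kernel-verified Lean document; each statement's English description precedes it below -/
import Mathlib

section
/- Let α ∈ (0,1] and let μ = (μ₁, μ₂) ∈ ℝ² satisfy ‖μ‖₁ = |μ₁| + |μ₂| ≤ 1. Let P₀ = Lap_2(0, α⁻¹) be the centered bivariate Laplace distribution with independent coordinates, and let P_{±μ} = ½·Lap_2(μ, α⁻¹) + ½·Lap_2(−μ, α⁻¹). Then the chi-square divergence satisfies χ²(P_{±μ}, P₀) = ∫ (dP_{±μ}/dP₀ − 1)² dP₀ ≤ (e²α⁴/4)·‖μ‖₁⁴ + 2e²α³·‖μ‖₁³ ≤ 16.7 · α³ · ‖μ‖₁³. -/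
open MeasureTheory Real
open scoped ENNReal

/-- The Laplace distribution on `ℝ` with mean `m` and scale parameter `b`. -/
noncomputable def Lap1' (m b : ℝ) : Measure ℝ :=
  volume.withDensity (fun x => ENNReal.ofReal ((2 * b)⁻¹ * Real.exp (-|x - m| / b)))

/-- The bivariate Laplace distribution with independent coordinates,
mean `(m₁, m₂)` and common scale `b`. -/
noncomputable def Lap2' (m₁ m₂ b : ℝ) : Measure (ℝ × ℝ) :=
  (Lap1' m₁ b).prod (Lap1' m₂ b)

/-- The correlation of the likelihood ratios, with respect to the standard Laplace distribution,
of the unit scale Laplace distributions with means `m` and `m'`. -/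
noncomputable def laplaceCorr (m m' : ℝ) : ℝ :=
  ∫ x : ℝ, 1 / 2 * exp (|x| - |x - m| - |x - m'|)

lemma integrableOn_and_integral_Ioi_of_piecewise_exp {f : ℝ → ℝ} {a q r s : ℝ} (ha : 0 ≤ a)
    (hr : r ≠ 0) (h₁ : ∀ x ∈ Set.Ioc 0 a, f x = q * exp (r * x))
    (h₂ : ∀ x ∈ Set.Ioi a, f x = s * exp (-x)) :
    IntegrableOn f (Set.Ioi 0) ∧
      ∫ x in Set.Ioi 0, f x = q * ((exp (r * a) - 1) / r) + s * exp (-a) := by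
  have i₁ : IntegrableOn f (Set.Ioc 0 a) := by
    rw [integrableOn_congr_fun h₁ measurableSet_Ioc]
    exact (Continuous.integrableOn_Icc (by fun_prop)).mono_set Set.Ioc_subset_Icc_self
  have i₂ : IntegrableOn f (Set.Ioi a) := by
    rw [integrableOn_congr_fun h₂ measurableSet_Ioi]
    exact (integrableOn_exp_neg_Ioi a).const_mul s
  have e₁ : ∫ x in Set.Ioc 0 a, f x = q * ((exp (r * a) - 1) / r) := by
    rw [setIntegral_congr_fun measurableSet_Ioc h₁, ← intervalIntegral.integral_of_le ha,
      intervalIntegral.integral_const_mul, intervalIntegral.integral_comp_mul_left _ hr,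
      integral_exp]
    simp [div_eq_inv_mul]
  have e₂ : ∫ x in Set.Ioi a, f x = s * exp (-a) := by
    rw [setIntegral_congr_fun measurableSet_Ioi h₂, integral_const_mul, integral_exp_neg_Ioi]
  rw [← Set.Ioc_union_Ioi_eq_Ioi ha]
  refine ⟨i₁.union i₂, ?_⟩
  rw [setIntegral_union (Set.Ioc_disjoint_Ioi le_rfl) measurableSet_Ioi i₁ i₂, e₁, e₂]

lemma laplaceCorr_neg (m m' : ℝ) : laplaceCorr (-m) (-m') = laplaceCorr m m' := by
  unfold laplaceCorr
  rw [← integral_neg_eq_self]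
  congr with x
  rw [abs_neg, show -x - -m = -(x - m) by ring, show -x - -m' = -(x - m') by ring,
    abs_neg, abs_neg]

lemma laplaceCorr_self_of_nonneg {a : ℝ} (ha : 0 ≤ a) :
    laplaceCorr a a = 2 / 3 * exp a + 1 / 3 * exp (-2 * a) := by
  unfold laplaceCorr
  set f : ℝ → ℝ := fun x ↦ 1 / 2 * exp (|x| - |x - a| - |x - a|) with hf
  obtain ⟨i, e⟩ := integrableOn_and_integral_Ioi_of_piecewise_exp (f := f)
    (q := 1 / 2 * exp (-2 * a)) (r := 3) (s := 1 / 2 * exp (2 * a)) ha (by norm_num)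
    (fun x hx ↦ by
      simp only [hf]
      rw [abs_of_pos hx.1, abs_of_nonpos (sub_nonpos.2 hx.2), mul_assoc, ← exp_add]
      ring_nf)
    (fun x hx ↦ by
      have hx : a < x := hx
      simp only [hf]
      rw [abs_of_pos (ha.trans_lt hx), abs_of_pos (sub_pos.2 hx), mul_assoc, ← exp_add]
      ring_nf)
  have h₀ : ∀ x ∈ Set.Iic (0 : ℝ), f x = 1 / 2 * exp (-2 * a) * exp x := fun x hx ↦ by
    have hx : x ≤ 0 := hx
    simp only [hf]
    rw [abs_of_nonpos hx, abs_of_nonpos (by linarith), mul_assoc, ← exp_add]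
    ring_nf
  have i₀ : IntegrableOn f (Set.Iic 0) := by
    rw [integrableOn_congr_fun h₀ measurableSet_Iic]
    exact (integrableOn_exp_Iic 0).const_mul _
  rw [← intervalIntegral.integral_Iic_add_Ioi i₀ i, e, setIntegral_congr_fun measurableSet_Iic h₀,
    integral_const_mul, integral_exp_Iic_zero, show exp (3 * a) = exp (2 * a) * exp a by
      rw [← exp_add]; ring_nf, exp_neg a, show exp (2 * a) = exp a * exp a by
      rw [← exp_add]; ring_nf, show exp (-2 * a) = (exp a * exp a)⁻¹ by
      rw [← exp_add, ← exp_neg]; ring_nf]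
  field_simp
  ring

lemma laplaceCorr_self (a : ℝ) :
    laplaceCorr a a = 2 / 3 * exp |a| + 1 / 3 * exp (-2 * |a|) := by
  rcases abs_choice a with h | h
  · rw [← laplaceCorr_self_of_nonneg (abs_nonneg a), h]
  · rw [← laplaceCorr_self_of_nonneg (abs_nonneg a), h, laplaceCorr_neg]

lemma laplaceCorr_self_neg_of_nonneg {a : ℝ} (ha : 0 ≤ a) :
    laplaceCorr a (-a) = 2 * exp (-a) - exp (-2 * a) := by
  obtain ⟨-, e⟩ := integrableOn_and_integral_Ioi_of_piecewise_exp
    (f := fun x ↦ 1 / 2 * exp (x - |x - a| - |x + a|))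
    (q := 1 / 2 * exp (-2 * a)) (r := 1) (s := 1 / 2) ha one_ne_zero
    (fun x hx ↦ by
      rw [abs_of_nonpos (sub_nonpos.2 hx.2), abs_of_nonneg (add_nonneg hx.1.le ha), mul_assoc,
        ← exp_add]
      ring_nf)
    (fun x hx ↦ by
      have hx : a < x := hx
      rw [abs_of_pos (sub_pos.2 hx), abs_of_pos (by linarith)]
      ring_nf)
  have h : laplaceCorr a (-a) = ∫ x : ℝ, 1 / 2 * exp (|x| - |(|x| - a)| - |(|x| + a)|) := by
    unfold laplaceCorr
    congr with x
    rcases abs_choice x with hx | hx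
    · rw [hx, sub_neg_eq_add]
    · rw [hx, show -x - a = -(x + a) by ring, show -x + a = -(x - a) by ring, abs_neg, abs_neg,
        sub_neg_eq_add, sub_right_comm]
  rw [h, integral_comp_abs (f := fun x ↦ 1 / 2 * exp (x - |x - a| - |x + a|)), e, one_mul, div_one,
    exp_neg a, show exp (-2 * a) = (exp a * exp a)⁻¹ by rw [← exp_add, ← exp_neg]; ring_nf]
  field_simp
  ring

lemma laplaceCorr_self_neg (a : ℝ) :
    laplaceCorr a (-a) = 2 * exp (-|a|) - exp (-2 * |a|) := by
  rcases abs_choice a with h | h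
  · rw [← laplaceCorr_self_neg_of_nonneg (abs_nonneg a), h]
  · rw [← laplaceCorr_self_neg_of_nonneg (abs_nonneg a), h, laplaceCorr_neg]

lemma laplaceCorr_zero_right (a : ℝ) : laplaceCorr a 0 = 1 := by
  have h := laplaceCorr_self 0
  unfold laplaceCorr at h ⊢
  simp only [sub_zero, sub_self, zero_sub, sub_right_comm |_|] at h ⊢
  rw [integral_sub_right_eq_self (fun x ↦ 1 / 2 * exp (-|x|)), h]
  norm_num

lemma exp_neg_le_quadratic {y : ℝ} (hy : 0 ≤ y) : exp (-y) ≤ 1 - y + y ^ 2 / 2 := by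
  have h := quadratic_le_exp_of_nonneg hy
  have h' : exp (-y) * exp y = 1 := by rw [← exp_add]; simp
  have hp : 0 < 1 - y + y ^ 2 / 2 := by nlinarith [sq_nonneg (y - 1)]
  refine le_of_mul_le_mul_right ?_ (exp_pos y)
  rw [h']
  nlinarith [mul_le_mul_of_nonneg_left h hp.le, sq_nonneg (y ^ 2)]

lemma laplaceCorr_self_le {a : ℝ} (ha : |a| ≤ 1) :
    laplaceCorr a a ≤ 1 + |a| ^ 2 + |a| ^ 3 := by
  rw [laplaceCorr_self]
  have h := exp_bound' (abs_nonneg a) ha (n := 3) (by norm_num)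
  simp only [Finset.sum_range_succ, Finset.sum_range_zero, Nat.factorial] at h
  norm_num at h
  rw [← sq_abs a] at h
  have h' := exp_neg_le_quadratic (y := 2 * |a|) (by positivity)
  rw [← neg_mul] at h'
  have h3 : 0 ≤ |a| ^ 3 := by positivity
  generalize |a| = t at *
  nlinarith

lemma laplaceCorr_self_neg_le {a : ℝ} (ha : |a| ≤ 1) :
    laplaceCorr a (-a) ≤ 1 - |a| ^ 2 + |a| ^ 3 := by
  rw [laplaceCorr_self_neg]
  have h := exp_neg_le_quadratic (abs_nonneg a)
  have h' : exp (-2 * |a|) = exp (-|a|) ^ 2 := by rw [← exp_nat_mul]; ring_nf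
  rw [h']
  have h0 := abs_nonneg a
  generalize |a| = t at *
  generalize exp (-t) = u at *
  nlinarith [mul_self_nonneg (t ^ 2), mul_nonneg h0 (sub_nonneg.2 ha),
    mul_nonneg (sub_nonneg.2 h) (by nlinarith : 0 ≤ (1 - u) + (t - t ^ 2 / 2))]

lemma laplaceCorr_nonneg (m m' : ℝ) : 0 ≤ laplaceCorr m m' :=
  integral_nonneg fun _ ↦ by positivity

lemma laplaceCorr_mixture_le {a b : ℝ} (h : |a| + |b| ≤ 1) :
    1 / 2 * (laplaceCorr a a * laplaceCorr b b + laplaceCorr a (-a) * laplaceCorr b (-b)) - 1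
      ≤ 14 * (|a| + |b|) ^ 3 := by
  have ha := abs_nonneg a
  have hb := abs_nonneg b
  have h₁ := mul_le_mul (laplaceCorr_self_le (a := a) (by linarith))
    (laplaceCorr_self_le (a := b) (by linarith)) (laplaceCorr_nonneg _ _) (by positivity)
  have h₂ := mul_le_mul (laplaceCorr_self_neg_le (a := a) (by linarith))
    (laplaceCorr_self_neg_le (a := b) (by linarith)) (laplaceCorr_nonneg _ _)
    ((laplaceCorr_nonneg _ _).trans (laplaceCorr_self_neg_le (a := a) (by linarith)))
  generalize |a| = s at *
  generalize |b| = t at *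
  have hs : s ≤ 1 := by linarith
  have ht : t ≤ 1 := by linarith
  have e1 : s ^ 3 * t ^ 3 ≤ s ^ 3 := mul_le_of_le_one_right (by positivity) (pow_le_one₀ hb ht)
  have e2 : s ^ 2 * t ^ 2 ≤ s ^ 2 * t := by
    gcongr; nlinarith
  have e3 : (s + t) ^ 3 = s ^ 3 + 3 * (s ^ 2 * t) + 3 * (s * t ^ 2) + t ^ 3 := by ring
  have p1 : 0 ≤ s ^ 2 * t := by positivity
  have p2 : 0 ≤ s * t ^ 2 := by positivity
  have p3 : 0 ≤ s ^ 3 := by positivity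
  have p4 : 0 ≤ t ^ 3 := by positivity
  nlinarith

/-- The density of `Lap1' m α⁻¹` with respect to `Lap1' 0 α⁻¹`. -/
noncomputable def laplaceRatio (α m x : ℝ) : ℝ := exp (α * |x| - α * |x - m|)

lemma laplaceRatio_pos (α m x : ℝ) : 0 < laplaceRatio α m x := exp_pos _

@[fun_prop]
lemma measurable_laplaceRatio (α m : ℝ) : Measurable (laplaceRatio α m) := by
  unfold laplaceRatio
  fun_prop

lemma laplaceRatio_le {α : ℝ} (hα : 0 ≤ α) (m x : ℝ) : laplaceRatio α m x ≤ exp (α * |m|) := by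
  unfold laplaceRatio
  rw [← mul_sub]
  gcongr
  have := abs_sub_abs_le_abs_sub x (x - m)
  simpa using this

lemma Lap1'_eq_withDensity {α : ℝ} (hα : 0 < α) (m : ℝ) :
    Lap1' m α⁻¹ = (Lap1' 0 α⁻¹).withDensity fun x ↦ ENNReal.ofReal (laplaceRatio α m x) := by
  unfold Lap1'
  rw [← withDensity_mul _ (by fun_prop) (by fun_prop)]
  congr with x
  rw [Pi.mul_apply, ← ENNReal.ofReal_mul (by positivity), laplaceRatio, mul_assoc, ← exp_add]
  congr 4
  simp only [div_inv_eq_mul, sub_zero]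
  ring

lemma integral_Lap1' {α : ℝ} (hα : 0 < α) (f : ℝ → ℝ) :
    ∫ x, f x ∂(Lap1' 0 α⁻¹) = ∫ x, α * (1 / 2 * exp (-|α * x|) * f x) := by
  unfold Lap1'
  rw [integral_withDensity_eq_integral_toReal_smul (by fun_prop) (by simp)]
  congr with x
  rw [ENNReal.toReal_ofReal (by positivity), abs_mul, abs_of_pos hα, smul_eq_mul]
  simp only [div_inv_eq_mul, sub_zero, mul_inv, inv_inv]
  ring_nf

lemma integral_laplaceRatio_mul {α : ℝ} (hα : 0 < α) (m m' : ℝ) :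
    ∫ x, laplaceRatio α m x * laplaceRatio α m' x ∂(Lap1' 0 α⁻¹) =
      laplaceCorr (α * m) (α * m') := by
  rw [integral_Lap1' hα, integral_const_mul, laplaceCorr]
  have h := Measure.integral_comp_mul_left
    (fun y ↦ 1 / 2 * exp (|y| - |y - α * m| - |y - α * m'|)) α
  rw [abs_of_pos (inv_pos.2 hα), smul_eq_mul, eq_inv_mul_iff_mul_eq₀ hα.ne'] at h
  rw [← h]
  congr 2 with x
  unfold laplaceRatio
  rw [← mul_sub α x m, ← mul_sub α x m', abs_mul, abs_mul, abs_mul, abs_of_pos hα, mul_assoc,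
    ← exp_add, ← exp_add]
  ring_nf

lemma laplaceRatio_zero (α x : ℝ) : laplaceRatio α 0 x = 1 := by simp [laplaceRatio]

lemma isProbabilityMeasure_Lap1' {α : ℝ} (hα : 0 < α) : IsProbabilityMeasure (Lap1' 0 α⁻¹) := by
  have h := integral_laplaceRatio_mul hα 0 0
  simp only [laplaceRatio_zero, mul_zero, laplaceCorr_zero_right, mul_one] at h
  rw [integral_const, smul_eq_mul, mul_one] at h
  exact ⟨by rwa [measureReal_def, ENNReal.toReal_eq_one_iff] at h⟩

/-- The density of `Lap2' m₁ m₂ α⁻¹` with respect to `Lap2' 0 0 α⁻¹`. -/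
noncomputable def laplaceRatioProd (α m₁ m₂ : ℝ) (z : ℝ × ℝ) : ℝ :=
  laplaceRatio α m₁ z.1 * laplaceRatio α m₂ z.2

lemma laplaceRatioProd_pos (α m₁ m₂ : ℝ) (z : ℝ × ℝ) : 0 < laplaceRatioProd α m₁ m₂ z :=
  mul_pos (laplaceRatio_pos _ _ _) (laplaceRatio_pos _ _ _)

@[fun_prop]
lemma measurable_laplaceRatioProd (α m₁ m₂ : ℝ) : Measurable (laplaceRatioProd α m₁ m₂) := by
  unfold laplaceRatioProd
  fun_prop

lemma Lap2'_eq_withDensity {α : ℝ} (hα : 0 < α) (m₁ m₂ : ℝ) :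
    Lap2' m₁ m₂ α⁻¹ =
      (Lap2' 0 0 α⁻¹).withDensity fun z ↦ ENNReal.ofReal (laplaceRatioProd α m₁ m₂ z) := by
  have := isProbabilityMeasure_Lap1' hα
  unfold Lap2'
  rw [Lap1'_eq_withDensity hα m₁, Lap1'_eq_withDensity hα m₂,
    prod_withDensity (by fun_prop) (by fun_prop)]
  congr with z
  rw [← ENNReal.ofReal_mul (laplaceRatio_pos _ _ _).le, laplaceRatioProd]

lemma integral_laplaceRatioProd_mul {α : ℝ} (hα : 0 < α) (m₁ m₂ m₁' m₂' : ℝ) :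
    ∫ z, laplaceRatioProd α m₁ m₂ z * laplaceRatioProd α m₁' m₂' z ∂(Lap2' 0 0 α⁻¹) =
      laplaceCorr (α * m₁) (α * m₁') * laplaceCorr (α * m₂) (α * m₂') := by
  have := isProbabilityMeasure_Lap1' hα
  rw [← integral_laplaceRatio_mul hα, ← integral_laplaceRatio_mul hα, ← integral_prod_mul, Lap2']
  congr with z
  exact mul_mul_mul_comm _ _ _ _

lemma integrable_laplaceRatioProd_mul {α : ℝ} (hα : 0 < α) (m₁ m₂ m₁' m₂' : ℝ) :
    Integrable (fun z ↦ laplaceRatioProd α m₁ m₂ z * laplaceRatioProd α m₁' m₂' z)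
      (Lap2' 0 0 α⁻¹) := by
  have := isProbabilityMeasure_Lap1' hα
  have : IsProbabilityMeasure (Lap2' 0 0 α⁻¹) := by unfold Lap2'; infer_instance
  refine .of_bound (by fun_prop) ((exp (α * |m₁|) * exp (α * |m₂|)) *
    (exp (α * |m₁'|) * exp (α * |m₂'|))) (.of_forall fun z ↦ ?_)
  have h := fun m x ↦ laplaceRatio_le hα.le m x
  have h' := fun m x ↦ (laplaceRatio_pos α m x).le
  rw [norm_of_nonneg (mul_pos (laplaceRatioProd_pos _ _ _ _) (laplaceRatioProd_pos _ _ _ _)).le]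
  unfold laplaceRatioProd
  gcongr <;> first | exact h _ _ | exact h' _ _ | exact mul_nonneg (h' _ _) (h' _ _)

lemma rnDeriv_laplace_mixture {α : ℝ} (hα : 0 < α) (m₁ m₂ n₁ n₂ : ℝ) :
    ((1 / 2 : ℝ≥0∞) • Lap2' m₁ m₂ α⁻¹ + (1 / 2 : ℝ≥0∞) • Lap2' n₁ n₂ α⁻¹).rnDeriv
      (Lap2' 0 0 α⁻¹) =ᵐ[Lap2' 0 0 α⁻¹] fun z ↦
        ENNReal.ofReal (1 / 2 * (laplaceRatioProd α m₁ m₂ z + laplaceRatioProd α n₁ n₂ z)) := by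
  have := isProbabilityMeasure_Lap1' hα
  have : IsProbabilityMeasure (Lap2' 0 0 α⁻¹) := by unfold Lap2'; infer_instance
  convert Measure.rnDeriv_withDensity (Lap2' 0 0 α⁻¹) _ using 2
  · rw [Lap2'_eq_withDensity hα m₁, Lap2'_eq_withDensity hα n₁, ← smul_add,
      ← withDensity_add_left (by fun_prop), ← withDensity_smul _ (by fun_prop)]
    congr with z
    rw [ENNReal.ofReal_mul (by norm_num),
      ENNReal.ofReal_add (laplaceRatioProd_pos _ _ _ _).le (laplaceRatioProd_pos _ _ _ _).le]
    simp [ENNReal.ofReal_inv_of_pos]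
  · fun_prop

lemma chiSq_laplace_mixture_eq {α : ℝ} (hα : 0 < α) (μ₁ μ₂ : ℝ) :
    ∫ x, ((((1 / 2 : ℝ≥0∞) • Lap2' μ₁ μ₂ α⁻¹ + (1 / 2 : ℝ≥0∞) • Lap2' (-μ₁) (-μ₂) α⁻¹).rnDeriv
      (Lap2' 0 0 α⁻¹) x).toReal - 1) ^ 2 ∂(Lap2' 0 0 α⁻¹) =
    1 / 2 * (laplaceCorr (α * μ₁) (α * μ₁) * laplaceCorr (α * μ₂) (α * μ₂) +
      laplaceCorr (α * μ₁) (-(α * μ₁)) * laplaceCorr (α * μ₂) (-(α * μ₂))) - 1 := by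
  set ν := Lap2' 0 0 α⁻¹ with hν
  set F := laplaceRatioProd α μ₁ μ₂ with hF
  set G := laplaceRatioProd α (-μ₁) (-μ₂) with hG
  set H := laplaceRatioProd α 0 0 with hH
  have hH1 : ∀ z, H z = 1 := fun z ↦ by simp [hH, laplaceRatioProd, laplaceRatio_zero]
  have hI := integrable_laplaceRatioProd_mul hα
  have e : ∫ x, ((((1 / 2 : ℝ≥0∞) • Lap2' μ₁ μ₂ α⁻¹ +
      (1 / 2 : ℝ≥0∞) • Lap2' (-μ₁) (-μ₂) α⁻¹).rnDeriv ν x).toReal - 1) ^ 2 ∂ν =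
      ∫ z, (1 / 4 * (F z * F z) + 1 / 4 * (G z * G z) + 1 / 2 * (F z * G z) + H z * H z
        - F z * H z - G z * H z) ∂ν := by
    refine integral_congr_ae ?_
    filter_upwards [rnDeriv_laplace_mixture hα μ₁ μ₂ (-μ₁) (-μ₂)] with z hz
    have h₁ : 0 < F z := laplaceRatioProd_pos _ _ _ _
    have h₂ : 0 < G z := laplaceRatioProd_pos _ _ _ _
    rw [hz, ENNReal.toReal_ofReal (by positivity), hH1]
    ring
  have iFF : Integrable (fun z ↦ F z * F z) ν := hI _ _ _ _
  have iGG : Integrable (fun z ↦ G z * G z) ν := hI _ _ _ _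
  have iFG : Integrable (fun z ↦ F z * G z) ν := hI _ _ _ _
  have iHH : Integrable (fun z ↦ H z * H z) ν := hI _ _ _ _
  have iFH : Integrable (fun z ↦ F z * H z) ν := hI _ _ _ _
  have iGH : Integrable (fun z ↦ G z * H z) ν := hI _ _ _ _
  rw [e, integral_sub (by fun_prop) iGH, integral_sub (by fun_prop) iFH,
    integral_add (by fun_prop) iHH, integral_add (by fun_prop) (by fun_prop),
    integral_add (by fun_prop) (by fun_prop), integral_const_mul, integral_const_mul,
    integral_const_mul]
  simp only [hF, hG, hH, hν, integral_laplaceRatioProd_mul hα, mul_neg, mul_zero,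
    laplaceCorr_neg, laplaceCorr_zero_right]
  ring

/-- for `α ∈ (0,1]` and `‖μ‖₁ ≤ 1`, the chi-square divergence
`χ²(P₊₋, P₀) = ∫ (dP₊₋/dP₀ − 1)² dP₀` between the symmetric two-component Laplace
mixture `P₊₋ = ½ Lap₂(μ, α⁻¹) + ½ Lap₂(−μ, α⁻¹)` and the centered Laplace
`P₀ = Lap₂(0, α⁻¹)` satisfies
`χ²(P₊₋, P₀) ≤ (e²α⁴/4) ‖μ‖₁⁴ + 2e²α³ ‖μ‖₁³ ≤ 16.7 α³ ‖μ‖₁³`. -/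
theorem chiSq_laplace_mixture_le (α μ₁ μ₂ : ℝ) (hα : α ∈ Set.Ioc (0 : ℝ) 1)
    (hμ : |μ₁| + |μ₂| ≤ 1) :
    (∫ x, ((((1 / 2 : ℝ≥0∞) • Lap2' μ₁ μ₂ α⁻¹ + (1 / 2 : ℝ≥0∞) • Lap2' (-μ₁) (-μ₂) α⁻¹).rnDeriv
              (Lap2' 0 0 α⁻¹) x).toReal - 1) ^ 2
      ∂(Lap2' 0 0 α⁻¹))
      ≤ Real.exp 1 ^ 2 * α ^ 4 / 4 * (|μ₁| + |μ₂|) ^ 4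
          + 2 * Real.exp 1 ^ 2 * α ^ 3 * (|μ₁| + |μ₂|) ^ 3 ∧
    Real.exp 1 ^ 2 * α ^ 4 / 4 * (|μ₁| + |μ₂|) ^ 4
          + 2 * Real.exp 1 ^ 2 * α ^ 3 * (|μ₁| + |μ₂|) ^ 3
      ≤ 16.7 * α ^ 3 * (|μ₁| + |μ₂|) ^ 3 := by
  obtain ⟨hα₀, hα₁⟩ := hα
  set s := |μ₁| + |μ₂| with hs
  have hs₀ : 0 ≤ s := by positivity
  have e₁ : |α * μ₁| + |α * μ₂| = α * s := by rw [abs_mul, abs_mul, abs_of_pos hα₀, hs]; ring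
  have hp : 0 ≤ α ^ 3 * s ^ 3 := by positivity
  have hp₄ : 0 ≤ α ^ 4 * s ^ 4 := by positivity
  constructor
  · rw [chiSq_laplace_mixture_eq hα₀]
    refine (laplaceCorr_mixture_le (by rw [e₁]; exact mul_le_one₀ hα₁ hs₀ hμ)).trans ?_
    have he : 7 ≤ exp 1 ^ 2 := by nlinarith [exp_one_gt_d9]
    rw [e₁, mul_pow]
    nlinarith [mul_le_mul_of_nonneg_right he hp, mul_nonneg (sq_nonneg (exp 1)) hp₄]
  · have he : exp 1 ^ 2 ≤ 7.4 := by nlinarith [exp_one_lt_d9, exp_pos 1]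
    have h₄ : α ^ 4 * s ^ 4 ≤ α ^ 3 * s ^ 3 := by
      rw [← mul_pow, ← mul_pow]
      exact pow_le_pow_of_le_one (by positivity) (mul_le_one₀ hα₁ hs₀ hμ) (by norm_num)
    nlinarith [mul_le_mul_of_nonneg_right he hp,
      mul_le_mul_of_nonneg_left h₄ (sq_nonneg (exp 1))]
end

section
/- Let α ∈ (0,1], δ ∈ (0,1], R > 0, d ≥ 1 and n ≥ 2 ln(12/δ). Let (b₁, v₁),…,(b_n, v_n) be i.i.d. random pairs with b_i ∈ {0,1} and v_i ∈ ℝ^d satisfying ‖v_i‖₂ ≤ R almost surely; set ψ = E[b₁] and λ = E[v₁ | b₁ = 1]. Let L′₁,…,L′_n be i.i.d. ∼ Lap_1(0, α⁻¹) and L₁,…,L_n be i.i.d. ∼ Lap_d(0, α⁻¹), all independent of the data and of each other. Define ψ̂ = n⁻¹( Σ b_i + 3 Σ L′_i ) and λ̂ = Σ b_i v_i + 3√d · R · Σ L_i. If ψ ≥ 18 d ln(24d/δ)/(α√n), then with probability at least 1 − δ, ‖ λ̂/(ψ̂ n) − λ ‖₂ ≤ (19d + 29) · R · ln(24d/δ)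 / (α ψ √n). -/
open MeasureTheory Real

/-- The centered Laplace distribution on `ℝ` with scale parameter `b`. -/
noncomputable def Lap1 (b : ℝ) : Measure ℝ :=
  volume.withDensity (fun x => ENNReal.ofReal ((2 * b)⁻¹ * Real.exp (-|x| / b)))

/-- The centered `d`-dimensional Laplace distribution with independent coordinates
and common scale `b`, as a measure on Euclidean space. -/
noncomputable def LapE (d : ℕ) (b : ℝ) : Measure (EuclideanSpace ℝ (Fin d)) :=
  volume.withDensity
    (fun x => ENNReal.ofReal (∏ i, (2 * b)⁻¹ * Real.exp (-|x i| / b)))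

open ProbabilityTheory in
/-- Chernoff bound for i.i.d. sums, normalized so that the moment generating function of one
summand at `1` is at most `exp (2 / n)`. -/
theorem measure_pi_le_sum_le {E : Type*} [MeasurableSpace E] (μ : Measure E)
    [IsProbabilityMeasure μ] {n : ℕ} (hn : n ≠ 0) {f : E → ℝ} (hf : Measurable f)
    (h : ∫⁻ x, ENNReal.ofReal (exp (f x)) ∂μ ≤ ENNReal.ofReal (exp (2 / n))) (l : ℝ) :
    Measure.pi (fun _ : Fin n => μ) {x | l + 2 ≤ ∑ i, f (x i)} ≤ ENNReal.ofReal (exp (-l)) := by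
  have hm : Measurable fun x => ENNReal.ofReal (exp (f x)) := by fun_prop
  have hprod : ∫⁻ x, ENNReal.ofReal (exp (∑ i, f (x i))) ∂Measure.pi (fun _ : Fin n => μ)
      ≤ ENNReal.ofReal (exp 2) := by
    calc _ = ∫⁻ x, ∏ i, ENNReal.ofReal (exp (f (x i))) ∂Measure.pi (fun _ : Fin n => μ) := by
          simp_rw [exp_sum, ENNReal.ofReal_prod_of_nonneg (fun i _ => (exp_pos _).le)]
      _ = ∏ _i : Fin n, ∫⁻ x, ENNReal.ofReal (exp (f x)) ∂μ := by
          rw [lintegral_prod_eq_prod_lintegral_of_indepFun Finset.univ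
            (fun (i : Fin n) (x : Fin n → E) => ENNReal.ofReal (exp (f (x i))))
            (iIndepFun_pi (X := fun _ x => ENNReal.ofReal (exp (f x))) fun _ => hm.aemeasurable)
            (fun i => hm.comp (measurable_pi_apply i))]
          refine Finset.prod_congr rfl fun i _ => ?_
          exact (measurePreserving_eval (fun _ : Fin n => μ) i).lintegral_comp hm
      _ ≤ ∏ _i : Fin n, ENNReal.ofReal (exp (2 / n)) := Finset.prod_le_prod' fun _ _ => h
      _ = ENNReal.ofReal (exp 2) := by
          rw [Finset.prod_const, Finset.card_univ, Fintype.card_fin,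
            ← ENNReal.ofReal_pow (exp_pos _).le, ← exp_nat_mul]
          congr 2
          field_simp
  have hmarkov := mul_meas_ge_le_lintegral (μ := Measure.pi (fun _ : Fin n => μ))
    (f := fun x => ENNReal.ofReal (exp (∑ i, f (x i)))) (by fun_prop)
    (ENNReal.ofReal (exp (l + 2)))
  have hset : {x : Fin n → E | l + 2 ≤ ∑ i, f (x i)}
      = {x | ENNReal.ofReal (exp (l + 2)) ≤ ENNReal.ofReal (exp (∑ i, f (x i)))} := by
    ext x
    simp [ENNReal.ofReal_le_ofReal_iff (exp_pos _).le]
  rw [hset]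
  set m := Measure.pi (fun _ : Fin n => μ)
    {x | ENNReal.ofReal (exp (l + 2)) ≤ ENNReal.ofReal (exp (∑ i, f (x i)))}
  calc m = ENNReal.ofReal (exp (-(l + 2))) * (ENNReal.ofReal (exp (l + 2)) * m) := by
        rw [← mul_assoc, ← ENNReal.ofReal_mul (exp_pos _).le, ← exp_add]; simp
    _ ≤ ENNReal.ofReal (exp (-(l + 2))) * ENNReal.ofReal (exp 2) := by
        gcongr; exact hmarkov.trans hprod
    _ = ENNReal.ofReal (exp (-l)) := by
        rw [← ENNReal.ofReal_mul (exp_pos _).le, ← exp_add]; congr 2; ring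

/-- Two-sided form of `measure_pi_le_sum_le`. -/
theorem measure_pi_le_abs_sum_le {E : Type*} [MeasurableSpace E] (μ : Measure E)
    [IsProbabilityMeasure μ] {n : ℕ} (hn : n ≠ 0) {f : E → ℝ} (hf : Measurable f) {s : ℝ}
    (h : ∀ t : ℝ, t ^ 2 = s ^ 2 →
      ∫⁻ x, ENNReal.ofReal (exp (t * f x)) ∂μ ≤ ENNReal.ofReal (exp (2 / n))) (l : ℝ) :
    Measure.pi (fun _ : Fin n => μ) {x | l + 2 ≤ |s * ∑ i, f (x i)|}
      ≤ 2 * ENNReal.ofReal (exp (-l)) := by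
  have h1 := measure_pi_le_sum_le μ hn (f := fun x => s * f x) (by fun_prop) (h s rfl) l
  have h2 := measure_pi_le_sum_le μ hn (f := fun x => -s * f x) (by fun_prop)
    (h (-s) (by ring)) l
  rw [two_mul]
  refine (measure_mono ?_).trans ((measure_union_le _ _).trans (add_le_add h1 h2))
  intro x hx
  simp only [Set.mem_union, Set.mem_ofPred_eq, ← Finset.mul_sum] at hx ⊢
  rw [neg_mul]
  exact le_abs.1 hx

/-- The density of the Laplace distribution, tilted exponentially, is integrable. -/
theorem laplace_tilted_integrable_and_integral {b s : ℝ} (hb : 0 < b) (hs : (b * s) ^ 2 < 1) :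
    Integrable (fun x : ℝ => (2 * b)⁻¹ * exp (-|x| / b) * exp (s * x)) ∧
      ∫ x : ℝ, (2 * b)⁻¹ * exp (-|x| / b) * exp (s * x) = (1 - (b * s) ^ 2)⁻¹ := by
  obtain ⟨hs1, hs2⟩ := abs_lt.1 ((sq_lt_one_iff_abs_lt_one _).1 hs)
  have hp : 0 < b⁻¹ + s := by
    have : b⁻¹ + s = (1 + b * s) / b := by field_simp
    rw [this]; exact div_pos (by linarith) hb
  have hm : -b⁻¹ + s < 0 := by
    have : -b⁻¹ + s = -((1 - b * s) / b) := by field_simp; ring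
    rw [this]; exact neg_neg_of_pos (div_pos (by linarith) hb)
  have e1 : Set.EqOn (fun x : ℝ => (2 * b)⁻¹ * exp ((b⁻¹ + s) * x))
      (fun x : ℝ => (2 * b)⁻¹ * exp (-|x| / b) * exp (s * x)) (Set.Iic 0) := by
    intro x hx
    simp only [abs_of_nonpos (Set.mem_Iic.1 hx), mul_assoc, ← exp_add]
    congr 2; field_simp
  have e2 : Set.EqOn (fun x : ℝ => (2 * b)⁻¹ * exp ((-b⁻¹ + s) * x))
      (fun x : ℝ => (2 * b)⁻¹ * exp (-|x| / b) * exp (s * x)) (Set.Ioi 0) := by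
    intro x hx
    simp only [abs_of_pos (Set.mem_Ioi.1 hx), mul_assoc, ← exp_add]
    congr 2; field_simp
  have i1 := IntegrableOn.congr_fun ((integrableOn_exp_mul_Iic hp 0).const_mul (2 * b)⁻¹) e1
    measurableSet_Iic
  have i2 := IntegrableOn.congr_fun ((integrableOn_exp_mul_Ioi hm 0).const_mul (2 * b)⁻¹) e2
    measurableSet_Ioi
  have hi : Integrable (fun x : ℝ => (2 * b)⁻¹ * exp (-|x| / b) * exp (s * x)) := by
    rw [← integrableOn_univ, ← Set.Iic_union_Ioi (a := (0 : ℝ))]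
    exact i1.union i2
  refine ⟨hi, ?_⟩
  rw [← intervalIntegral.integral_Iic_add_Ioi i1 i2, ← setIntegral_congr_fun measurableSet_Iic e1,
    ← setIntegral_congr_fun measurableSet_Ioi e2, integral_const_mul, integral_const_mul,
    integral_exp_mul_Iic hp, integral_exp_mul_Ioi hm]
  have h1 : 1 + b * s ≠ 0 := by linarith
  have h2 : 1 - b * s ≠ 0 := by linarith
  have h3 : 1 - (b * s) ^ 2 ≠ 0 := by linarith
  have h4 : b⁻¹ + s = (1 + b * s) / b := by field_simp
  have h5 : -b⁻¹ + s = -((1 - b * s) / b) := by field_simp; ring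
  rw [h4, h5]
  simp only [mul_zero, exp_zero]
  have h6 : 1 - (b * s) ^ 2 = (1 + b * s) * (1 - b * s) := by ring
  rw [h6]
  field_simp
  ring

theorem lintegral_exp_mul_Lap1 {b s : ℝ} (hb : 0 < b) (hs : (b * s) ^ 2 < 1) :
    ∫⁻ x, ENNReal.ofReal (exp (s * x)) ∂Lap1 b = ENNReal.ofReal (1 - (b * s) ^ 2)⁻¹ := by
  obtain ⟨hi, he⟩ := laplace_tilted_integrable_and_integral hb hs
  rw [Lap1, lintegral_withDensity_eq_lintegral_mul _ (by fun_prop) (by fun_prop), ← he,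
    ofReal_integral_eq_lintegral_ofReal hi (Filter.Eventually.of_forall fun x => by positivity)]
  refine lintegral_congr fun x => ?_
  rw [Pi.mul_apply, ← ENNReal.ofReal_mul (by positivity)]

theorem lintegral_exp_mul_LapE {d : ℕ} (j : Fin d) {b s : ℝ} (hb : 0 < b)
    (hs : (b * s) ^ 2 < 1) :
    ∫⁻ x, ENNReal.ofReal (exp (s * x j)) ∂LapE d b = ENNReal.ofReal (1 - (b * s) ^ 2)⁻¹ := by
  classical
  let t : Fin d → ℝ := fun i => if i = j then s else 0
  have ht : ∀ i, (b * t i) ^ 2 < 1 := by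
    intro i; by_cases h : i = j <;> simp [t, h, hs]
  have key : ∀ x : EuclideanSpace ℝ (Fin d),
      ((∏ i, (2 * b)⁻¹ * exp (-|x i| / b)) * exp (s * x j))
        = ∏ i, ((2 * b)⁻¹ * exp (-|x i| / b) * exp (t i * x i)) := by
    intro x
    have hexp : exp (s * x j) = ∏ i, exp (t i * x i) := by
      rw [← exp_sum]
      simp [t]
    rw [hexp, ← Finset.prod_mul_distrib]
  have hi : Integrable fun x : Fin d → ℝ =>
      ∏ i, ((2 * b)⁻¹ * exp (-|x i| / b) * exp (t i * x i)) :=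
    Integrable.fintype_prod fun i => (laplace_tilted_integrable_and_integral hb (ht i)).1
  rw [LapE, lintegral_withDensity_eq_lintegral_mul _ (by fun_prop) (by fun_prop)]
  calc _ = ∫⁻ x : EuclideanSpace ℝ (Fin d), ENNReal.ofReal
        (∏ i, ((2 * b)⁻¹ * exp (-|x i| / b) * exp (t i * x i))) := by
        refine lintegral_congr fun x => ?_
        rw [Pi.mul_apply, ← ENNReal.ofReal_mul (Finset.prod_nonneg fun i _ => by positivity), key]
    _ = ∫⁻ x : Fin d → ℝ, ENNReal.ofReal
        (∏ i, ((2 * b)⁻¹ * exp (-|x i| / b) * exp (t i * x i))) :=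
        ((PiLp.volume_preserving_toLp (Fin d)).lintegral_comp (by fun_prop)).symm
    _ = ENNReal.ofReal (∏ i, ∫ x : ℝ, (2 * b)⁻¹ * exp (-|x| / b) * exp (t i * x)) := by
        rw [← integral_fintype_prod_volume_eq_prod
          (fun i (x : ℝ) => (2 * b)⁻¹ * exp (-|x| / b) * exp (t i * x)),
          ofReal_integral_eq_lintegral_ofReal hi
            (Filter.Eventually.of_forall fun x => Finset.prod_nonneg fun i _ => by positivity)]
    _ = ENNReal.ofReal (1 - (b * s) ^ 2)⁻¹ := by
        simp_rw [fun i => (laplace_tilted_integrable_and_integral hb (ht i)).2]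
        rw [Finset.prod_eq_single j (fun i _ h => by simp [t, h]) (by simp)]
        simp [t]

theorem isProbabilityMeasure_Lap1 {b : ℝ} (hb : 0 < b) : IsProbabilityMeasure (Lap1 b) :=
  ⟨by simpa using lintegral_exp_mul_Lap1 (s := 0) hb (by simp)⟩

theorem isProbabilityMeasure_LapE {d : ℕ} (hd : 1 ≤ d) {b : ℝ} (hb : 0 < b) :
    IsProbabilityMeasure (LapE d b) :=
  ⟨by simpa using lintegral_exp_mul_LapE (s := 0) (⟨0, hd⟩ : Fin d) hb (by simp)⟩

theorem inv_one_sub_le_exp_two_mul {x : ℝ} (h0 : 0 ≤ x) (h1 : x ≤ 1 / 2) :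
    (1 - x)⁻¹ ≤ exp (2 * x) := by
  refine le_trans ?_ (add_one_le_exp _)
  rw [inv_le_iff_one_le_mul₀ (by linarith)]
  nlinarith

open ProbabilityTheory in
/-- Hoeffding's lemma in the form of a lower Lebesgue integral. -/
theorem lintegral_exp_mul_le_of_mem_Icc {E : Type*} [MeasurableSpace E] (μ : Measure E)
    [IsProbabilityMeasure μ] {X : E → ℝ} {a b : ℝ} (hm : Measurable X)
    (hX : ∀ᵐ x ∂μ, X x ∈ Set.Icc a b) (h0 : ∫ x, X x ∂μ = 0) (t : ℝ) :
    ∫⁻ x, ENNReal.ofReal (exp (t * X x)) ∂μ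
      ≤ ENNReal.ofReal (exp (((b - a) / 2) ^ 2 * t ^ 2 / 2)) := by
  have h := hasSubgaussianMGF_of_mem_Icc_of_integral_eq_zero hm.aemeasurable hX h0
  rw [← ofReal_integral_eq_lintegral_ofReal (h.integrable_exp_mul t)
    (Filter.Eventually.of_forall fun x => (exp_pos _).le)]
  refine ENNReal.ofReal_le_ofReal ((h.mgf_le t).trans (le_of_eq ?_))
  simp [div_pow]

theorem norm_le_sqrt_mul_of_forall_abs_le {d : ℕ} {y : EuclideanSpace ℝ (Fin d)} {M : ℝ}
    (hM : 0 ≤ M) (h : ∀ j, |y j| ≤ M) : ‖y‖ ≤ sqrt d * M := by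
  rw [EuclideanSpace.norm_eq]
  refine sqrt_le_iff.2 ⟨by positivity, ?_⟩
  calc ∑ i, ‖y i‖ ^ 2 ≤ ∑ _i : Fin d, M ^ 2 :=
        Finset.sum_le_sum fun i _ => pow_le_pow_left₀ (norm_nonneg _) (h i) 2
    _ = (sqrt d * M) ^ 2 := by rw [mul_pow, sq_sqrt (Nat.cast_nonneg d)]; simp

/-- An almost surely `{0, 1}`-valued coordinate agrees with the indicator of its level set at `1`,
so it integrates like a restriction. -/
theorem integral_fst_smul_eq_setIntegral {E F : Type*} [MeasurableSpace E]
    [NormedAddCommGroup F] [NormedSpace ℝ F]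
    {ν : Measure (ℝ × E)} (hb : ∀ᵐ p ∂ν, p.1 = 0 ∨ p.1 = 1) (g : ℝ × E → F) :
    ∫ p, p.1 • g p ∂ν = ∫ p in {p | p.1 = 1}, g p ∂ν := by
  have hs : MeasurableSet {p : ℝ × E | p.1 = 1} := measurable_fst (measurableSet_singleton 1)
  rw [← integral_indicator hs]
  refine integral_congr_ae ?_
  filter_upwards [hb] with p hp
  rcases hp with h | h <;> simp [Set.indicator, h]

theorem integral_fst_eq_measureReal {E : Type*} [MeasurableSpace E] {ν : Measure (ℝ × E)}
    (hb : ∀ᵐ p ∂ν, p.1 = 0 ∨ p.1 = 1) :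
    ∫ p, p.1 ∂ν = ν.real {p | p.1 = 1} := by
  simpa using integral_fst_smul_eq_setIntegral hb (fun _ => (1 : ℝ))

theorem norm_conditionalMean_le {E : Type*} [NormedAddCommGroup E] [NormedSpace ℝ E]
    [MeasurableSpace E] {ν : Measure (ℝ × E)} [IsFiniteMeasure ν] {R : ℝ}
    (hb : ∀ᵐ p ∂ν, ‖p.2‖ ≤ R)
    (hpos : 0 < ν.real {p | p.1 = 1}) :
    ‖(ν.real {p | p.1 = 1})⁻¹ • ∫ p in {p | p.1 = 1}, p.2 ∂ν‖ ≤ R := by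
  rw [norm_smul, norm_of_nonneg (inv_nonneg.2 hpos.le), inv_mul_le_iff₀ hpos, mul_comm]
  refine norm_setIntegral_le_of_norm_le_const_ae (measure_lt_top _ _) ?_
  exact ae_restrict_of_ae hb

theorem integral_fst_smul_sub_conditionalMean {E : Type*} [NormedAddCommGroup E] [NormedSpace ℝ E]
    [MeasurableSpace E] [BorelSpace E] [SecondCountableTopology E] [CompleteSpace E]
    {ν : Measure (ℝ × E)} [IsFiniteMeasure ν] {R : ℝ}
    (hb : ∀ᵐ p ∂ν, (p.1 = 0 ∨ p.1 = 1) ∧ ‖p.2‖ ≤ R) (hpos : 0 < ν.real {p | p.1 = 1}) :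
    ∫ p, p.1 • (p.2 - (ν.real {p | p.1 = 1})⁻¹ • ∫ p in {p | p.1 = 1}, p.2 ∂ν) ∂ν = 0 := by
  have hi : Integrable (fun p : ℝ × E => p.2) ν :=
    Integrable.of_bound measurable_snd.aestronglyMeasurable R (hb.mono fun p h => h.2)
  rw [integral_fst_smul_eq_setIntegral (hb.mono fun p h => h.1),
    integral_sub hi.integrableOn (integrable_const _), setIntegral_const,
    smul_inv_smul₀ hpos.ne', sub_self]

/-- The deterministic part of the utility guarantee: the estimate is accurate as soon as the four
normalized sums of fluctuations are all below `l + 2`. -/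
theorem norm_estimate_sub_le_of_abs_sum_lt {d n : ℕ} (hd : 1 ≤ d) (hn : n ≠ 0) {α l R ψ : ℝ}
    (hα : α ∈ Set.Ioc (0 : ℝ) 1) (hl : 2 ≤ l) (hR : 0 < R)
    (hψ : 18 * d * l / (α * sqrt n) ≤ ψ) {lam : EuclideanSpace ℝ (Fin d)} (hlam : ‖lam‖ ≤ R)
    {v : Fin n → ℝ × EuclideanSpace ℝ (Fin d)} {x : Fin n → ℝ}
    {y : Fin n → EuclideanSpace ℝ (Fin d)}
    (h1 : |2 / sqrt n * ∑ i, ((v i).1 - ψ)| < l + 2)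
    (h2 : ∀ j, |(2 * R * sqrt n)⁻¹ * ∑ i, (v i).1 * ((v i).2 j - lam j)| < l + 2)
    (h3 : |α / sqrt n * ∑ i, x i| < l + 2)
    (h4 : ∀ j, |α / sqrt n * ∑ i, y i j| < l + 2) :
    ‖(((∑ i, (v i).1 + 3 * ∑ i, x i) / n) * n)⁻¹ •
        (∑ i, (v i).1 • (v i).2 + (3 * sqrt d * R) • ∑ i, y i) - lam‖
      ≤ (19 * d + 29) * R * l / (α * ψ * sqrt n) := by
  obtain ⟨hα0, hα1⟩ := hα
  have hn0 : (0 : ℝ) < n := by exact_mod_cast Nat.pos_of_ne_zero hn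
  have hd1 : (1 : ℝ) ≤ d := by exact_mod_cast hd
  have hd0 : (0 : ℝ) < d := by linarith
  have hr : 0 < sqrt n := sqrt_pos.2 hn0
  have hrr : sqrt n * sqrt n = n := mul_self_sqrt hn0.le
  have hdd : sqrt d * sqrt d = d := mul_self_sqrt hd0.le
  have hsd : sqrt d ≤ d := sqrt_le_iff.2 ⟨hd0.le, by nlinarith⟩
  set r := sqrt n
  set T := l * r / α with hT
  have hT0 : 0 < T := by positivity
  have hlr : l * r ≤ T := by
    rw [hT, le_div_iff₀ hα0]
    exact mul_le_of_le_one_right (by positivity) hα1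
  have unscale : ∀ {c S : ℝ}, 0 < c → |c * S| < l + 2 → |S| ≤ 2 * l / c := by
    intro c S hc h
    rw [abs_mul, abs_of_pos hc] at h
    rw [le_div_iff₀ hc]
    linarith
  have hψn : 18 * d * T ≤ ψ * n := by
    have h := mul_le_mul_of_nonneg_right hψ hn0.le
    refine le_trans (le_of_eq ?_) h
    rw [hT, ← hrr]
    field_simp
  have hψn0 : 0 < ψ * n := lt_of_lt_of_le (by positivity) hψn
  have hψ0 : 0 < ψ := pos_of_mul_pos_left hψn0 hn0.le
  have b1 : |∑ i, ((v i).1 - ψ)| ≤ T := by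
    refine (unscale (by positivity) h1).trans (le_trans (le_of_eq ?_) hlr)
    field_simp
  have b2 : ∀ j, |∑ i, (v i).1 * ((v i).2 j - lam j)| ≤ 4 * R * T := fun j => by
    refine (unscale (by positivity) (h2 j)).trans
      (le_trans (le_of_eq ?_) (mul_le_mul_of_nonneg_left hlr (by positivity : 0 ≤ 4 * R)))
    field_simp
    ring
  have b3 : |∑ i, x i| ≤ 2 * T := by
    refine (unscale (by positivity) h3).trans (le_of_eq ?_)
    rw [hT]; field_simp
  have b4 : ∀ j, |∑ i, y i j| ≤ 2 * T := fun j => by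
    refine (unscale (by positivity) (h4 j)).trans (le_of_eq ?_)
    rw [hT]; field_simp
  rw [div_mul_cancel₀ _ hn0.ne']
  set D := ∑ i, (v i).1 + 3 * ∑ i, x i with hD
  have hDlb : 11 / 18 * (ψ * n) ≤ D := by
    have e : ∑ i, ((v i).1 - ψ) = ∑ i, (v i).1 - ψ * n := by
      simp [Finset.sum_sub_distrib, mul_comm]
    rw [e] at b1
    have c1 := (abs_le.1 b1).1
    have c3 := (abs_le.1 b3).1
    have : T ≤ d * T := le_mul_of_one_le_left hT0.le hd1
    linarith
  have hD0 : 0 < D := lt_of_lt_of_le (by positivity) hDlb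
  have hdecomp : D⁻¹ • (∑ i, (v i).1 • (v i).2 + (3 * sqrt d * R) • ∑ i, y i) - lam
      = D⁻¹ • (∑ i, (v i).1 • ((v i).2 - lam) + (3 * sqrt d * R) • ∑ i, y i
          - (3 * ∑ i, x i) • lam) := by
    have : lam = D⁻¹ • D • lam := (inv_smul_smul₀ hD0.ne' lam).symm
    conv_lhs => rw [this]
    rw [← smul_sub]
    congr 1
    simp only [smul_sub, Finset.sum_sub_distrib, ← Finset.sum_smul, hD, add_smul]
    abel
  have n1 : ‖∑ i, (v i).1 • ((v i).2 - lam)‖ ≤ d * (4 * R * T) := by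
    refine (norm_le_sqrt_mul_of_forall_abs_le (M := 4 * R * T) (by positivity) fun j => ?_).trans
      (mul_le_mul_of_nonneg_right hsd (by positivity))
    simpa using b2 j
  have n2 : ‖(3 * sqrt d * R) • ∑ i, y i‖ ≤ 6 * d * R * T := by
    have h : ‖∑ i, y i‖ ≤ sqrt d * (2 * T) :=
      norm_le_sqrt_mul_of_forall_abs_le (by positivity) fun j => by simpa using b4 j
    rw [norm_smul, norm_of_nonneg (by positivity)]
    refine (mul_le_mul_of_nonneg_left h (by positivity)).trans (le_of_eq ?_)
    linear_combination 6 * R * T * hdd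
  have n3 : ‖(3 * ∑ i, x i) • lam‖ ≤ 6 * T * R := by
    rw [norm_smul, norm_eq_abs, abs_mul, abs_of_pos (by norm_num : (0 : ℝ) < 3)]
    exact mul_le_mul (by linarith) hlam (norm_nonneg _) (by positivity)
  rw [hdecomp, norm_smul, norm_of_nonneg (inv_nonneg.2 hD0.le)]
  calc _ ≤ (11 / 18 * (ψ * n))⁻¹ * ((10 * d + 6) * R * T) := by
        refine mul_le_mul (inv_anti₀ (by positivity) hDlb) ?_ (norm_nonneg _) (by positivity)
        refine (norm_sub_le _ _).trans ((add_le_add_left (norm_add_le _ _) _).trans ?_)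
        linarith
    _ = 18 / 11 * (10 * d + 6) * (R * T / (ψ * n)) := by field_simp
    _ ≤ (19 * d + 29) * (R * T / (ψ * n)) :=
        mul_le_mul_of_nonneg_right (by linarith) (by positivity)
    _ = (19 * d + 29) * R * l / (α * ψ * r) := by
        rw [hT, ← hrr]; field_simp

theorem lintegral_exp_mul_fst_sub_le {E : Type*} [MeasurableSpace E] {ν : Measure (ℝ × E)}
    [IsProbabilityMeasure ν] (hb : ∀ᵐ p ∂ν, p.1 = 0 ∨ p.1 = 1) {n t : ℝ} (hn : 0 < n)
    (ht : t ^ 2 = (2 / sqrt n) ^ 2) :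
    ∫⁻ p, ENNReal.ofReal (exp (t * (p.1 - ∫ q, q.1 ∂ν))) ∂ν ≤ ENNReal.ofReal (exp (2 / n)) := by
  set ψ := ∫ q, q.1 ∂ν with hψ
  have hi : Integrable (fun p : ℝ × E => p.1) ν :=
    Integrable.of_bound measurable_fst.aestronglyMeasurable 1
      (hb.mono fun p h => by rcases h with h | h <;> simp [h])
  have h := lintegral_exp_mul_le_of_mem_Icc ν (X := fun p => p.1 - ψ) (a := -ψ) (b := 1 - ψ)
    (by fun_prop) (hb.mono fun p h => by rcases h with h | h <;> simp [h])
    (by rw [integral_sub hi (integrable_const _)]; simp [hψ]) t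
  refine h.trans (ENNReal.ofReal_le_ofReal (exp_le_exp.2 ?_))
  rw [ht, div_pow 2 (sqrt n), sq_sqrt hn.le]
  have : 0 < 1 / n := by positivity
  calc _ = 1 / 2 * (1 / n) := by ring
    _ ≤ 2 * (1 / n) := by linarith
    _ = 2 / n := by ring

theorem lintegral_exp_mul_conditional_le {d : ℕ}
    {ν : Measure (ℝ × EuclideanSpace ℝ (Fin d))} [IsProbabilityMeasure ν] {R : ℝ} (hR : 0 < R)
    (hb : ∀ᵐ p ∂ν, (p.1 = 0 ∨ p.1 = 1) ∧ ‖p.2‖ ≤ R) {lam : EuclideanSpace ℝ (Fin d)}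
    (hlam : ‖lam‖ ≤ R) (h0 : ∫ p, p.1 • (p.2 - lam) ∂ν = 0) (j : Fin d) {n t : ℝ} (hn : 0 < n)
    (ht : t ^ 2 = ((2 * R * sqrt n)⁻¹) ^ 2) :
    ∫⁻ p, ENNReal.ofReal (exp (t * (p.1 * (p.2 j - lam j)))) ∂ν
      ≤ ENNReal.ofReal (exp (2 / n)) := by
  have hbound : ∀ᵐ p ∂ν, ‖p.1 • (p.2 - lam)‖ ≤ 2 * R := by
    filter_upwards [hb] with p hp
    have : ‖p.2 - lam‖ ≤ 2 * R := (norm_sub_le _ _).trans (by linarith [hp.2])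
    rcases hp.1 with h | h <;> simp [h, this, hR.le]
  have hi : Integrable (fun p : ℝ × EuclideanSpace ℝ (Fin d) => p.1 • (p.2 - lam)) ν :=
    Integrable.of_bound (by fun_prop) (2 * R) hbound
  have hj : ∫ p, p.1 * (p.2 j - lam j) ∂ν = 0 := by
    have := (EuclideanSpace.proj (𝕜 := ℝ) j).integral_comp_comm hi
    rw [h0] at this
    simpa using this
  have h := lintegral_exp_mul_le_of_mem_Icc ν (X := fun p => p.1 * (p.2 j - lam j))
    (a := -(2 * R)) (b := 2 * R) (by fun_prop)
    (hbound.mono fun p h => abs_le.1 (by simpa using (PiLp.norm_apply_le _ j).trans h)) hj t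
  refine h.trans (ENNReal.ofReal_le_ofReal (exp_le_exp.2 ?_))
  rw [ht, inv_pow, mul_pow, sq_sqrt hn.le]
  have : 0 < 1 / n := by positivity
  calc _ = 1 / 2 * (1 / n) := by field_simp; ring
    _ ≤ 2 * (1 / n) := by linarith
    _ = 2 / n := by ring

theorem inv_one_sub_sq_le_exp {α n t : ℝ} (hα : 0 < α) (hn : 2 ≤ n)
    (ht : t ^ 2 = (α / sqrt n) ^ 2) :
    (α⁻¹ * t) ^ 2 < 1 ∧ (1 - (α⁻¹ * t) ^ 2)⁻¹ ≤ exp (2 / n) := by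
  have hsq : (α⁻¹ * t) ^ 2 = 1 / n := by
    rw [mul_pow, ht, div_pow, sq_sqrt (by linarith)]; field_simp
  have hle : 1 / n ≤ 1 / 2 := one_div_le_one_div_of_le (by norm_num) hn
  rw [hsq]
  refine ⟨by linarith, (inv_one_sub_le_exp_two_mul (by positivity) hle).trans (le_of_eq ?_)⟩
  rw [mul_one_div]

/-- utility of the Laplace-privatized conditional-mean estimate of the
LPLR-Update subroutine. With `(bᵢ, vᵢ)` i.i.d., `bᵢ ∈ {0,1}`, `‖vᵢ‖ ≤ R` a.s.,
`ψ = E[b₁]`, `λ = E[v₁ | b₁ = 1]`, privatized statistics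
`ψ̂ = n⁻¹(Σ bᵢ + 3Σ L′ᵢ)` and `λ̂ = Σ bᵢ vᵢ + 3√d R Σ Lᵢ`, if
`ψ ≥ 18 d ln(24d/δ)/(α√n)` and `n ≥ 2 ln(12/δ)` then with probability at least `1 − δ`,
`‖λ̂/(ψ̂ n) − λ‖ ≤ (19d + 29) R ln(24d/δ)/(α ψ √n)`. -/
theorem private_conditional_mean_concentration
    (α δ R : ℝ) (hα : α ∈ Set.Ioc (0 : ℝ) 1) (hδ : δ ∈ Set.Ioc (0 : ℝ) 1)
    (hR : 0 < R) (d : ℕ) (hd : 1 ≤ d) (n : ℕ)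
    (hn : 2 * Real.log (12 / δ) ≤ n)
    (ν : Measure (ℝ × EuclideanSpace ℝ (Fin d))) [IsProbabilityMeasure ν]
    (hb : ∀ᵐ p ∂ν, (p.1 = 0 ∨ p.1 = 1) ∧ ‖p.2‖ ≤ R)
    (ψ : ℝ) (hψdef : ψ = ∫ p, p.1 ∂ν)
    (lam : EuclideanSpace ℝ (Fin d))
    (hlamdef : lam = (ν {p | p.1 = 1}).toReal⁻¹ • ∫ p in {p | p.1 = 1}, p.2 ∂ν)
    (hψlb : 18 * d * Real.log (24 * d / δ) / (α * Real.sqrt n) ≤ ψ) :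
    ENNReal.ofReal (1 - δ) ≤
      ((Measure.pi (fun _ : Fin n => ν)).prod
          ((Measure.pi (fun _ : Fin n => Lap1 α⁻¹)).prod
            (Measure.pi (fun _ : Fin n => LapE d α⁻¹))))
        {ω | ‖(((∑ i, (ω.1 i).1 + 3 * ∑ i, ω.2.1 i) / n) * n)⁻¹ •
                (∑ i, (ω.1 i).1 • (ω.1 i).2
                  + (3 * Real.sqrt d * R) • ∑ i, ω.2.2 i) - lam‖
              ≤ (19 * d + 29) * R * Real.log (24 * d / δ) / (α * ψ * Real.sqrt n)} := by
  have hδ0 := hδ.1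
  have hα0 := hα.1
  have hd1 : (1 : ℝ) ≤ d := by exact_mod_cast hd
  have hd0 : (0 : ℝ) < d := by linarith
  have two_le_log : ∀ x : ℝ, 12 ≤ x → 2 ≤ Real.log x := fun x hx => by
    rw [le_log_iff_exp_le (by linarith)]
    have h := exp_one_lt_d9
    have : exp 2 = exp 1 * exp 1 := by rw [← exp_add]; norm_num
    nlinarith [exp_pos 1]
  have hn2 : (2 : ℝ) ≤ n := by
    have := two_le_log (12 / δ) (by rw [le_div_iff₀ hδ0]; linarith [hδ.2])
    linarith
  have hn0 : (0 : ℝ) < n := by linarith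
  have hn' : n ≠ 0 := by rintro rfl; simp at hn0
  set l := Real.log (24 * d / δ) with hl
  have hl2 : 2 ≤ l := two_le_log _ (by rw [le_div_iff₀ hδ0]; linarith [hδ.2])
  have hexpl : exp (-l) = δ / (24 * d) := by
    rw [exp_neg, hl, exp_log (by positivity), inv_div]
  have hr : 0 < sqrt n := sqrt_pos.2 hn0
  have hψ0 : 0 < ψ := lt_of_lt_of_le (by positivity) hψlb
  have hb1 : ∀ᵐ p ∂ν, p.1 = 0 ∨ p.1 = 1 := hb.mono fun p h => h.1
  have hpos : 0 < ν.real {p | p.1 = 1} := by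
    rwa [← integral_fst_eq_measureReal hb1, ← hψdef]
  have hlam : ‖lam‖ ≤ R := hlamdef ▸ norm_conditionalMean_le (hb.mono fun p h => h.2) hpos
  have hmean : ∫ p, p.1 • (p.2 - lam) ∂ν = 0 :=
    hlamdef ▸ integral_fst_smul_sub_conditionalMean hb hpos
  have := isProbabilityMeasure_Lap1 (inv_pos.2 hα0)
  have := isProbabilityMeasure_LapE hd (inv_pos.2 hα0)
  have t1 := measure_pi_le_abs_sum_le ν hn' (f := fun p => p.1 - ψ) (by fun_prop)
    (s := 2 / sqrt n)
    (fun t ht => by simpa only [← hψdef] using lintegral_exp_mul_fst_sub_le hb1 hn0 ht) l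
  have t2 := fun j => measure_pi_le_abs_sum_le ν hn' (f := fun p => p.1 * (p.2 j - lam j))
    (by fun_prop) (s := (2 * R * sqrt n)⁻¹)
    (fun t ht => lintegral_exp_mul_conditional_le hR hb hlam hmean j hn0 ht) l
  have t3 := measure_pi_le_abs_sum_le (Lap1 α⁻¹) hn' (f := fun x => x) (by fun_prop)
    (s := α / sqrt n) (fun t ht => by
      obtain ⟨h1, h2⟩ := inv_one_sub_sq_le_exp hα0 hn2 ht
      rw [lintegral_exp_mul_Lap1 (inv_pos.2 hα0) h1]
      exact ENNReal.ofReal_le_ofReal h2) l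
  have t4 := fun j : Fin d => measure_pi_le_abs_sum_le (LapE d α⁻¹) hn' (f := fun x => x j)
    (by fun_prop) (s := α / sqrt n) (fun t ht => by
      obtain ⟨h1, h2⟩ := inv_one_sub_sq_le_exp hα0 hn2 ht
      rw [lintegral_exp_mul_LapE j (inv_pos.2 hα0) h1]
      exact ENNReal.ofReal_le_ofReal h2) l
  set ε := ENNReal.ofReal (exp (-l)) with hε
  have u2 := (measure_iUnion_fintype_le _ _).trans (Finset.sum_le_sum fun j _ => t2 j)
  have u4 := (measure_iUnion_fintype_le _ _).trans (Finset.sum_le_sum fun j _ => t4 j)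
  set A₁ := {v : Fin n → ℝ × EuclideanSpace ℝ (Fin d) |
    l + 2 ≤ |2 / sqrt n * ∑ i, ((v i).1 - ψ)|}
  set A₂ := ⋃ j, {v : Fin n → ℝ × EuclideanSpace ℝ (Fin d) |
    l + 2 ≤ |(2 * R * sqrt n)⁻¹ * ∑ i, (v i).1 * ((v i).2 j - lam j)|} with hA₂
  set A₃ := {x : Fin n → ℝ | l + 2 ≤ |α / sqrt n * ∑ i, x i|}
  set A₄ := ⋃ j, {y : Fin n → EuclideanSpace ℝ (Fin d) |
    l + 2 ≤ |α / sqrt n * ∑ i, y i j|} with hA₄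
  set P := (Measure.pi (fun _ : Fin n => ν)).prod
    ((Measure.pi (fun _ : Fin n => Lap1 α⁻¹)).prod (Measure.pi (fun _ : Fin n => LapE d α⁻¹)))
    with hP
  set S := {ω : (Fin n → ℝ × EuclideanSpace ℝ (Fin d)) ×
      (Fin n → ℝ) × (Fin n → EuclideanSpace ℝ (Fin d)) |
    ‖(((∑ i, (ω.1 i).1 + 3 * ∑ i, ω.2.1 i) / n) * n)⁻¹ •
        (∑ i, (ω.1 i).1 • (ω.1 i).2 + (3 * Real.sqrt d * R) • ∑ i, ω.2.2 i) - lam‖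
      ≤ (19 * d + 29) * R * l / (α * ψ * Real.sqrt n)} with hS
  have hcover : Set.univ ⊆ S ∪ ((A₁ ∪ A₂) ×ˢ Set.univ ∪ Set.univ ×ˢ (A₃ ×ˢ Set.univ)
      ∪ Set.univ ×ˢ (Set.univ ×ˢ A₄)) := by
    rintro ⟨v, x, y⟩ -
    by_contra hω
    simp only [hA₂, hA₄, A₁, A₃, Set.mem_union, Set.mem_prod, Set.mem_iUnion, Set.mem_univ,
      Set.mem_ofPred_eq, true_and, and_true, not_or, not_exists, not_le] at hω
    obtain ⟨hS', ⟨⟨h1, h2⟩, h3⟩, h4⟩ := hω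
    exact hS' (norm_estimate_sub_le_of_abs_sum_lt hd hn' hα hl2 hR hψlb hlam h1 h2 h3 h4)
  have hbad : P ((A₁ ∪ A₂) ×ˢ Set.univ ∪ Set.univ ×ˢ (A₃ ×ˢ Set.univ)
      ∪ Set.univ ×ˢ (Set.univ ×ˢ A₄)) ≤ ENNReal.ofReal δ := by
    calc _ ≤ (2 * ε + ∑ _j : Fin d, 2 * ε) + 2 * ε + ∑ _j : Fin d, 2 * ε := by
          refine (measure_union_le _ _).trans (add_le_add ((measure_union_le _ _).trans
            (add_le_add ?_ ?_)) ?_)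
          · rw [hP, Measure.prod_prod, measure_univ, mul_one]
            exact (measure_union_le _ _).trans (add_le_add t1 u2)
          · simpa [hP] using t3
          · simpa [hP] using u4
      _ = ENNReal.ofReal ((4 * d + 4) * exp (-l)) := by
          rw [ENNReal.ofReal_mul (by positivity), ← hε,
            ENNReal.ofReal_add (by positivity) (by norm_num), ENNReal.ofReal_mul (by norm_num)]
          simp only [Finset.sum_const, Finset.card_univ, Fintype.card_fin, nsmul_eq_mul,
            ENNReal.ofReal_natCast, ENNReal.ofReal_ofNat]
          ring
      _ ≤ ENNReal.ofReal δ := by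
          refine ENNReal.ofReal_le_ofReal ?_
          rw [hexpl, mul_div_assoc', div_le_iff₀ (by positivity)]
          nlinarith
  have htotal : 1 ≤ P S + ENNReal.ofReal δ := by
    calc (1 : ENNReal) = P Set.univ := measure_univ.symm
      _ ≤ _ := (measure_mono hcover).trans (measure_union_le _ _)
      _ ≤ _ := add_le_add_right hbad _
  rw [ENNReal.ofReal_sub _ hδ0.le, ENNReal.ofReal_one]
  exact tsub_le_iff_right.2 htotal
end
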